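/- Let A be a nonempty closed convex subset of ℝ^k, let λ > 0, and let G₁, G₂ : ℝ^k → ℝ be differentiable functions such that G₁ satisfies the λ-gap inequality on A. If â₁ ∈ A minimizes G₁ over A and â₂ ∈ A minimizes G₂ over A, then 2λ‖â₁ − â₂‖ ≤ ‖∇G₁(â₂) − ∇G₂(â₂)‖. -/

import Mathlib

open scoped RealInnerProductSpace

/-!
Adding the gap inequality for `(a, b)` and `(b, a)` cancels the values of `G₁` and shows that `∇G₁`
is strongly monotone on `A` with constant `2λ`. By first-order optimality, each minimizer `âᵢ`
satisfies `⟪∇Gᵢ âᵢ, y - âᵢ⟫ ≥ 0` for all `y ∈ A`. Testing each of these variational inequalities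
with the other minimizer gives
`2λ ‖â₁ - â₂‖² ≤ ⟪∇G₁ â₁ - ∇G₁ â₂, â₁ - â₂⟫ ≤ ⟪∇G₂ â₂ - ∇G₁ â₂, â₁ - â₂⟫`,
and Cauchy–Schwarz concludes.
-/

section VariationalInequality

variable {E : Type*} [NormedAddCommGroup E] [InnerProductSpace ℝ E]

/-- Strong monotonicity of the vector field `F` on `s` with constant `c`. The sign of `c` is not
prescribed; plain monotonicity is the case `c = 0`. -/
def StronglyMonotoneOn (c : ℝ) (F : E → E) (s : Set E) : Prop :=
  ∀ x ∈ s, ∀ y ∈ s, c * ‖x - y‖ ^ 2 ≤ ⟪F x - F y, x - y⟫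

/-- The point `x` solves the (Stampacchia) variational inequality of the vector field `F` over `s`.
For `F` a gradient this is the first-order condition for minimization over `s`. -/
def SolvesVariationalInequality (F : E → E) (s : Set E) (x : E) : Prop :=
  x ∈ s ∧ ∀ y ∈ s, 0 ≤ ⟪F x, y - x⟫

/-- The `lam`-gap inequality for `G` on `s`, i.e. strong convexity in first-order form. The field
`g` stands for the gradient of `G` and is kept as a parameter, since a gradient within `s` need not
be unique. -/
def GapInequalityOn (lam : ℝ) (G : E → ℝ) (g : E → E) (s : Set E) : Prop :=
  ∀ a ∈ s, ∀ b ∈ s, lam * ‖b - a‖ ^ 2 ≤ G b - G a - ⟪g a, b - a⟫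

variable {s : Set E}

theorem GapInequalityOn.stronglyMonotoneOn {lam : ℝ} {G : E → ℝ} {g : E → E}
    (h : GapInequalityOn lam G g s) : StronglyMonotoneOn (2 * lam) g s := by
  intro x hx y hy
  have gap_xy : lam * ‖x - y‖ ^ 2 ≤ G y - G x + ⟪g x, x - y⟫ := by
    simpa only [← neg_sub x y, norm_neg, inner_neg_right, sub_neg_eq_add] using h x hx y hy
  have gap_yx : lam * ‖x - y‖ ^ 2 ≤ G x - G y - ⟪g y, x - y⟫ := h y hy x hx
  rw [inner_sub_left]
  linarith

theorem StronglyMonotoneOn.mul_norm_sub_le {c : ℝ} {F₁ F₂ : E → E} {x₁ x₂ : E}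
    (hF₁ : StronglyMonotoneOn c F₁ s) (h₁ : SolvesVariationalInequality F₁ s x₁)
    (h₂ : SolvesVariationalInequality F₂ s x₂) : c * ‖x₁ - x₂‖ ≤ ‖F₁ x₂ - F₂ x₂‖ := by
  obtain rfl | hne := eq_or_ne x₁ x₂
  · simp
  have test₁ : ⟪F₁ x₁, x₁ - x₂⟫ ≤ 0 := by
    simpa only [← neg_sub x₁ x₂, inner_neg_right, neg_nonneg] using h₁.2 x₂ h₂.1
  have test₂ : 0 ≤ ⟪F₂ x₂, x₁ - x₂⟫ := h₂.2 x₁ h₁.1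
  refine le_of_mul_le_mul_right ?_ (norm_sub_pos_iff.2 hne)
  calc
    c * ‖x₁ - x₂‖ * ‖x₁ - x₂‖ = c * ‖x₁ - x₂‖ ^ 2 := by ring
    _ ≤ ⟪F₁ x₁ - F₁ x₂, x₁ - x₂⟫ := hF₁ x₁ h₁.1 x₂ h₂.1
    _ ≤ ⟪F₂ x₂ - F₁ x₂, x₁ - x₂⟫ := by
      rw [inner_sub_left, inner_sub_left]
      linarith
    _ ≤ ‖F₂ x₂ - F₁ x₂‖ * ‖x₁ - x₂‖ := real_inner_le_norm _ _
    _ = ‖F₁ x₂ - F₂ x₂‖ * ‖x₁ - x₂‖ := by rw [norm_sub_rev]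

end VariationalInequality

section ConstrainedMinimizers

theorem hasGradientWithinAt_of_hasGradientAt {𝕜 F : Type*} [RCLike 𝕜] [NormedAddCommGroup F]
    [InnerProductSpace 𝕜 F] [CompleteSpace F] {f : F → 𝕜} {f' x : F} {s : Set F}
    (h : HasGradientAt f f' x) : HasGradientWithinAt f f' s x :=
  hasGradientWithinAt_iff_hasFDerivWithinAt.2 h.hasFDerivAt.hasFDerivWithinAt

variable {E : Type*} [NormedAddCommGroup E] [InnerProductSpace ℝ E] [CompleteSpace E]

theorem solvesVariationalInequality_of_isLocalMinOn {s : Set E} {G : E → ℝ} {g : E → E} {x : E}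
    (hs : StarConvex ℝ x s) (hx : x ∈ s) (hg : HasGradientWithinAt G (g x) s x)
    (hmin : IsLocalMinOn G s x) : SolvesVariationalInequality g s x :=
  ⟨hx, fun _ hy ↦ hmin.hasFDerivWithinAt_nonneg hg.hasFDerivWithinAt
    (sub_mem_posTangentConeAt_of_segment_subset (hs.segment_subset hy))⟩

theorem gradient_stability_of_constrained_minimizers_general {A : Set E} (hA : Convex ℝ A)
    {lam : ℝ} {G₁ G₂ : E → ℝ} {g₁ g₂ : E → E} {a₁ a₂ : E}
    (hg₁ : ∀ a ∈ A, HasGradientWithinAt G₁ (g₁ a) A a) (hg₂ : HasGradientWithinAt G₂ (g₂ a₂) A a₂)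
    (hgap : GapInequalityOn lam G₁ g₁ A) (ha₁ : a₁ ∈ A) (ha₂ : a₂ ∈ A)
    (hmin₁ : IsLocalMinOn G₁ A a₁) (hmin₂ : IsLocalMinOn G₂ A a₂) :
    2 * lam * ‖a₁ - a₂‖ ≤ ‖g₁ a₂ - g₂ a₂‖ :=
  hgap.stronglyMonotoneOn.mul_norm_sub_le
    (solvesVariationalInequality_of_isLocalMinOn (hA.starConvex ha₁) ha₁ (hg₁ a₁ ha₁) hmin₁)
    (solvesVariationalInequality_of_isLocalMinOn (hA.starConvex ha₂) ha₂ hg₂ hmin₂)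

end ConstrainedMinimizers

theorem gradient_stability_of_constrained_minimizers {k : ℕ}
    (A : Set (EuclideanSpace ℝ (Fin k)))
    (hA : A.Nonempty) (hAclosed : IsClosed A) (hAconv : Convex ℝ A)
    (lam : ℝ) (hlam : 0 < lam)
    (G₁ G₂ : EuclideanSpace ℝ (Fin k) → ℝ)
    (hG₁ : Differentiable ℝ G₁) (hG₂ : Differentiable ℝ G₂)
    (hGap : ∀ a ∈ A, ∀ b ∈ A,
      lam * ‖b - a‖ ^ 2 ≤ G₁ b - G₁ a - ⟪gradient G₁ a, b - a⟫)
    (ahat₁ ahat₂ : EuclideanSpace ℝ (Fin k)) (hahat₁A : ahat₁ ∈ A) (hahat₂A : ahat₂ ∈ A)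
    (hmin₁ : ∀ a ∈ A, G₁ ahat₁ ≤ G₁ a) (hmin₂ : ∀ a ∈ A, G₂ ahat₂ ≤ G₂ a) :
    2 * lam * ‖ahat₁ - ahat₂‖ ≤ ‖gradient G₁ ahat₂ - gradient G₂ ahat₂‖ :=
  gradient_stability_of_constrained_minimizers_general hAconv
    (fun a _ ↦ hasGradientWithinAt_of_hasGradientAt (hG₁ a).hasGradientAt)
    (hasGradientWithinAt_of_hasGradientAt (hG₂ ahat₂).hasGradientAt) hGap hahat₁A hahat₂A
    (IsMinOn.localize hmin₁) (IsMinOn.localize hmin₂)
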